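/- arXiv:1611.02209 — 2 statements merged into one kernel-verified Lean document; each statement's English description precedes it below -/
import Mathlib

section
/- Let Γ be an icc group and let Ω₁, Ω₂ ≤ Γ be subgroups that commute elementwise, such that Ω₁Ω₂ has finite index in Γ. Then Ω₁ and Ω₂ are icc groups: for each i ∈ {1,2} and every a ∈ Ωᵢ with a ≠ 1, the set {hah⁻¹ : h ∈ Ωᵢ} is infinite. -/
/-!
Let `a ≠ 1` lie in one of the two subgroups, say `A`, and let `B` be the other. Since `B`
centralizes `a`, conjugating `a` by elements of `A ⊔ B = AB` gives nothing more than conjugating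
by elements of `A`. As `AB` has finite index, the conjugacy class of `a` in `Γ` is a finite union of
conjugates of its `A`-conjugacy class (`finite_conj_of_finiteIndex`), so if the latter were finite,
`Γ` would not be icc. The hypotheses are symmetric in `A` and `B`, so `infinite_conj_left` gives
both halves.
-/

/-- If `H` has finite index and the `H`-conjugates of `a` all lie in a finite set `C`, then `a` has
finitely many conjugates: the conjugacy class of `a` is covered by the sets `t C t⁻¹`, with `t`
running over representatives of the finitely many cosets `t H`. -/
theorem finite_conj_of_finiteIndex {Γ : Type*} [Group Γ] (H : Subgroup Γ) (hidx : H.index ≠ 0)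
    (a : Γ) (C : Set Γ) (hC : C.Finite) (hH : ∀ h ∈ H, h * a * h⁻¹ ∈ C) :
    {x : Γ | ∃ h : Γ, x = h * a * h⁻¹}.Finite := by
  have : Finite (Γ ⧸ H) := Subgroup.index_ne_zero_iff_finite.1 hidx
  refine (Set.finite_iUnion fun q : Γ ⧸ H => hC.image fun c => q.out * c * q.out⁻¹).subset ?_
  rintro x ⟨g, rfl⟩
  obtain ⟨h, hh⟩ := QuotientGroup.mk_out_eq_mul H g
  refine Set.mem_iUnion.2 ⟨(g : Γ ⧸ H), _, hH _ (H.inv_mem h.2), ?_⟩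
  simp only [hh]
  group

theorem infinite_conj_left {Γ : Type*} [Group Γ]
    (hicc : ∀ g : Γ, g ≠ 1 → {x : Γ | ∃ h : Γ, x = h * g * h⁻¹}.Infinite)
    (A B : Subgroup Γ) (hcomm : ∀ a ∈ A, ∀ b ∈ B, a * b = b * a) (hidx : (A ⊔ B).index ≠ 0) :
    ∀ a ∈ A, a ≠ 1 → {x : Γ | ∃ h ∈ A, x = h * a * h⁻¹}.Infinite := by
  intro a ha ha1 hfin
  refine hicc a ha1 (finite_conj_of_finiteIndex (A ⊔ B) hidx a _ hfin fun h hh => ?_)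
  have hnorm : A ≤ Subgroup.normalizer (B : Set Γ) := by
    refine le_trans ?_ (Subgroup.centralizer_le_normalizer (B : Set Γ))
    exact fun x hx => Subgroup.mem_centralizer_iff.2 fun y hy => (hcomm x hx y hy).symm
  rw [← SetLike.mem_coe, Subgroup.coe_mul_of_left_le_normalizer_right A B hnorm] at hh
  obtain ⟨x, hx, y, hy, rfl⟩ := Set.mem_mul.1 hh
  -- The factor from `B` centralizes `a`, so conjugating by `x * y` is conjugating by `x`.
  refine ⟨x, hx, ?_⟩
  have hya : y * a * y⁻¹ = a := by rw [← hcomm a ha y hy, mul_inv_cancel_right]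
  calc x * y * a * (x * y)⁻¹ = x * (y * a * y⁻¹) * x⁻¹ := by group
    _ = x * a * x⁻¹ := by rw [hya]


/-- If `Γ` is icc and `Ω₁, Ω₂ ≤ Γ` commute elementwise with `Ω₁Ω₂` of finite index in `Γ`,
then `Ω₁` and `Ω₂` are icc groups. -/
theorem stmt_6 {Γ : Type*} [Group Γ]
    (hicc : ∀ g : Γ, g ≠ 1 → {x : Γ | ∃ h : Γ, x = h * g * h⁻¹}.Infinite)
    (Ω₁ Ω₂ : Subgroup Γ)
    (hcomm : ∀ a ∈ Ω₁, ∀ b ∈ Ω₂, a * b = b * a)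
    (hidx : (Ω₁ ⊔ Ω₂).index ≠ 0) :
    (∀ a ∈ Ω₁, a ≠ 1 → {x : Γ | ∃ h ∈ Ω₁, x = h * a * h⁻¹}.Infinite) ∧
    (∀ a ∈ Ω₂, a ≠ 1 → {x : Γ | ∃ h ∈ Ω₂, x = h * a * h⁻¹}.Infinite) := by
  exact ⟨infinite_conj_left hicc Ω₁ Ω₂ hcomm hidx,
    infinite_conj_left hicc Ω₂ Ω₁ (fun b hb a ha => (hcomm a ha b hb).symm)
      (by rwa [sup_comm] at hidx)⟩
end

section
/- Let Γ be a group and let f : Γ → ℂ be a nonzero element of ℓ²(Γ). Set α = sup_{g ∈ Γ} |f(g)| and F = {g ∈ Γ : |f(g)| = α}. Then F is finite and nonempty, the quantity β = sup_{g ∉ F} |f(g)| (interpreted as 0 if F = Γ) satisfies β < α, and for every k ∈ Γ: if ‖λ_k f − f‖₂ < α − β, where (λ_k f)(g) = f(k⁻¹g) is the left translate of f by k, then kF = F. -/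
/-!
A square-summable function tends to zero along the cofinite filter, so each set
`{g : c ≤ ‖f g‖}` with `c > 0` is finite. Hence `‖f ·‖` attains its supremum on any set where it is
not identically zero: this makes `F` finite and nonempty and gives `β < α`.
If `g ∈ F` but `k * g ∉ F`, then evaluating `λ_k f - f` at `k * g` gives
`‖λ_k f - f‖₂ ≥ |f g| - |f (k * g)| ≥ α - β`. So `‖λ_k f - f‖₂ < α - β` forces `k F ⊆ F`, and the
two finite sets are equal because they have the same cardinality.
-/

theorem finite_superlevel_of_lp_two {ι : Type*} (f : lp (fun _ : ι => ℂ) 2) {c : ℝ} (hc : 0 < c) :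
    {i | c ≤ ‖f i‖}.Finite := by
  have hs : Summable fun i => ‖f i‖ ^ (2 : ENNReal).toReal :=
    (memℓp_gen_iff (by norm_num)).1 (lp.memℓp f)
  have hlt := hs.tendsto_cofinite_zero.eventually (gt_mem_nhds (show (0 : ℝ) < c ^ 2 by positivity))
  refine Set.Finite.subset (Filter.eventually_cofinite.1 hlt) fun i hi => ?_
  simp only [Set.mem_ofPred_eq, ENNReal.toReal_ofNat, Real.rpow_ofNat, not_lt] at hi ⊢
  gcongr

/-- A real function with finite superlevel sets at positive heights attains its supremum as soon as
it takes a positive value. -/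
theorem exists_forall_le_of_finite_superlevel {ι : Type*} (u : ι → ℝ)
    (hu : ∀ c : ℝ, 0 < c → {i | c ≤ u i}.Finite) {i₀ : ι} (h₀ : 0 < u i₀) :
    ∃ i, 0 < u i ∧ ∀ j, u j ≤ u i := by
  obtain ⟨i, hi, hmax⟩ := Set.exists_max_image _ u (hu _ h₀) ⟨i₀, le_refl (u i₀)⟩
  have hi' : u i₀ ≤ u i := hi
  refine ⟨i, h₀.trans_le hi', fun j => ?_⟩
  rcases le_total (u i₀) (u j) with h | h
  · exact hmax j h
  · exact h.trans hi'

/-- Let `f` be a nonzero element of `ℓ²(Γ)`, `α = sup_g |f(g)|`, `F = {g : |f(g)| = α}` and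
`β = sup_{g ∉ F} |f(g)|` (interpreted as `0` when `F = Γ`). Then `F` is finite and nonempty,
`β < α`, and for any `k ∈ Γ`, if the left translate `λ_k f` satisfies `‖λ_k f - f‖₂ < α - β`
then `kF = F`. -/
theorem stmt_8 {Γ : Type*} [Group Γ] (f : lp (fun _ : Γ => ℂ) 2) (hf : f ≠ 0)
    (α : ℝ) (hα : α = ⨆ g : Γ, ‖f g‖)
    (F : Set Γ) (hF : F = {g : Γ | ‖f g‖ = α})
    (β : ℝ) (hβ : β = ⨆ g : ↥Fᶜ, ‖f (g : Γ)‖) :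
    F.Finite ∧ F.Nonempty ∧ β < α ∧
      ∀ (k : Γ) (f' : lp (fun _ : Γ => ℂ) 2),
        (∀ g : Γ, f' g = f (k⁻¹ * g)) → ‖f' - f‖ < α - β →
          (fun x => k * x) '' F = F := by
  have hfin := fun (c : ℝ) (hc : 0 < c) => finite_superlevel_of_lp_two f hc
  obtain ⟨g₀, hg₀⟩ : ∃ g, f g ≠ 0 := by
    by_contra! h
    exact hf (lp.ext (funext h))
  obtain ⟨m, hm, hmax⟩ :=
    exists_forall_le_of_finite_superlevel (fun g => ‖f g‖) hfin (norm_pos_iff.2 hg₀)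
  have hbdd : BddAbove (Set.range fun g => ‖f g‖) := ⟨‖f m‖, by rintro _ ⟨g, rfl⟩; exact hmax g⟩
  have hαm : ‖f m‖ = α := by
    have : Nonempty Γ := ⟨m⟩
    rw [hα]
    exact le_antisymm (le_ciSup hbdd m) (ciSup_le hmax)
  have hα0 : 0 < α := hαm ▸ hm
  have hle : ∀ g, ‖f g‖ ≤ α := fun g => hαm ▸ hmax g
  have hFfin : F.Finite := (hfin α hα0).subset fun g hg => by
    rw [hF] at hg
    exact hg.ge
  have hβα : β < α := by
    by_cases h : ∃ g : ↥Fᶜ, 0 < ‖f (g : Γ)‖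
    · obtain ⟨g₁, hg₁⟩ := h
      obtain ⟨n, -, hnmax⟩ := exists_forall_le_of_finite_superlevel
        (fun g : ↥Fᶜ => ‖f (g : Γ)‖)
        (fun c hc => Set.Finite.preimage (f := ((↑) : ↥Fᶜ → Γ)) Subtype.val_injective.injOn
          (hfin c hc)) hg₁
      have : Nonempty ↥Fᶜ := ⟨n⟩
      have hn : ‖f (n : Γ)‖ ≠ α := fun h => n.2 (hF.ge h)
      rw [hβ]
      exact (ciSup_le hnmax).trans_lt (lt_of_le_of_ne (hle n) hn)
    -- The case `F = Γ` is included here: the real supremum of the empty family is `0`.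
    · push Not at h
      rw [hβ]
      exact (Real.iSup_le h le_rfl).trans_lt hα0
  refine ⟨hFfin, ⟨m, by rw [hF]; exact hαm⟩, hβα, fun k f' hf' hk => ?_⟩
  refine Set.eq_of_subset_of_ncard_le ?_
    (Set.ncard_image_of_injective F (mul_right_injective k)).ge hFfin
  rintro _ ⟨g, hg, rfl⟩
  by_contra hkg
  have hgα : ‖f g‖ = α := by rwa [hF] at hg
  have hkβ : ‖f (k * g)‖ ≤ β := by
    rw [hβ]
    exact le_ciSup (f := fun g : ↥Fᶜ => ‖f (g : Γ)‖)
      (hbdd.mono (by rintro _ ⟨x, rfl⟩; exact ⟨x, rfl⟩)) ⟨k * g, hkg⟩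
  have hcoord : ‖(f' - f) (k * g)‖ ≤ ‖f' - f‖ := lp.norm_apply_le_norm two_ne_zero _ _
  rw [lp.coeFn_sub, Pi.sub_apply, hf', inv_mul_cancel_left] at hcoord
  linarith [norm_sub_norm_le (f g) (f (k * g))]
end
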